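/- A graph G with stability number 2 that contains an induced odd antihole C̄_{2k+1} (k ≥ 2) and a vertex w outside it with at least one neighbor and at least one non-neighbor in C̄_{2k+1} contains, by the BENT theorem, an LS₊-imperfect induced subgraph; in particular, a facet-defining LS₊-perfect graph G with α(G)=2 is either an odd antihole or the complete join of odd antiholes and a (possibly empty) clique. -/

import Mathlib

open Finset

variable {V : Type*}

def IsStableSet (G : SimpleGraph V) (S : Set V) : Prop :=
  S.Pairwise (fun a b => ¬ G.Adj a b)

def ClawFree (G : SimpleGraph V) : Prop :=
  ¬ ∃ x a b c : V, G.Adj x a ∧ G.Adj x b ∧ G.Adj x c ∧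
    a ≠ b ∧ a ≠ c ∧ b ≠ c ∧ ¬ G.Adj a b ∧ ¬ G.Adj a c ∧ ¬ G.Adj b c

noncomputable def stabilityNumber (G : SimpleGraph V) [Fintype V] : ℕ :=
  sSup {n | ∃ S : Finset V, IsStableSet G ↑S ∧ S.card = n}

def STAB (G : SimpleGraph V) [Fintype V] [DecidableEq V] : Set (V → ℝ) :=
  convexHull ℝ {x | ∃ S : Finset V, IsStableSet G ↑S ∧ x = fun i => if i ∈ S then (1:ℝ) else 0}

def ESTAB (G : SimpleGraph V) : Set (V → ℝ) :=
  {x | (∀ i, 0 ≤ x i ∧ x i ≤ 1) ∧ ∀ i j, G.Adj i j → x i + x j ≤ 1}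

def coneSet (K : Set (V → ℝ)) : Set (ℝ × (V → ℝ)) :=
  {p | ∃ (t : ℝ) (y : V → ℝ), 0 ≤ t ∧ y ∈ K ∧ p = (t, t • y)}

def Mplus (K : Set (V → ℝ)) [Fintype V] [DecidableEq V] :
    Set (Matrix (Option V) (Option V) ℝ) :=
  {Y | Y.PosSemidef ∧ (∀ i, Y i none = Y i i) ∧
    (∀ i : V, (Y none (some i), fun j => Y (some j) (some i)) ∈ coneSet K) ∧
    (∀ i : V, (Y none none - Y none (some i),
        fun j => Y (some j) none - Y (some j) (some i)) ∈ coneSet K)}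

def LSplus (K : Set (V → ℝ)) [Fintype V] [DecidableEq V] : Set (V → ℝ) :=
  {x | ∃ Y ∈ Mplus K, Y none none = 1 ∧ ∀ i, Y (some i) none = x i}

def cycleG (n : ℕ) : SimpleGraph (ZMod n) :=
  SimpleGraph.fromRel (fun a b => b = a + 1)

/-- G is an odd antihole: isomorphic to the complement of a chordless odd cycle C_{2k+1},
k ≥ 2. -/
def IsOddAntihole {W : Type*} (G : SimpleGraph W) : Prop :=
  ∃ k : ℕ, 2 ≤ k ∧ Nonempty (G ≃g (cycleG (2 * k + 1))ᶜ)

/-- STAB(G) has a full-support facet. -/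
def HasFullSupportFacet {V : Type*} [Fintype V] [DecidableEq V] (G : SimpleGraph V) : Prop :=
  ∃ (a : V → ℝ) (b : ℝ), (∀ i, a i ≠ 0) ∧
    (∀ x ∈ STAB G, ∑ i, a i * x i ≤ b) ∧
    ∃ f : Fin (Fintype.card V) → (V → ℝ), AffineIndependent ℝ f ∧
      ∀ m, f m ∈ STAB G ∧ ∑ i, a i * f m i = b

/-- G is the complete join of one or more odd antiholes and a (possibly empty) clique. -/
def IsJoinOfOddAntiholesAndClique {V : Type*} (G : SimpleGraph V) : Prop :=
  ∃ (m : ℕ) (B : Fin m → Set V) (Q : Set V), 1 ≤ m ∧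
    (∀ i j, i ≠ j → Disjoint (B i) (B j)) ∧ (∀ i, Disjoint (B i) Q) ∧
    (Q ∪ ⋃ i, B i) = Set.univ ∧
    (∀ i, IsOddAntihole (G.induce (B i))) ∧
    G.IsClique Q ∧
    (∀ i j x y, i ≠ j → x ∈ B i → y ∈ B j → G.Adj x y) ∧
    (∀ i x y, x ∈ B i → y ∈ Q → G.Adj x y)

/-!
Let `α(G) ≤ 2`, so that the complement `H` of `G` is triangle-free. The sum of the rank-one
matrices of the edges of `H` represents a point of the face `∑ xᵢ = 2`. If some vertex `c` has
degree at least `3` in `H` and lies on an odd closed walk of `H`, this matrix can be pushed past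
the face: give the sets `{c}` and `∅` the small masses `-3δ/2` and `δ/2`. The odd closed walk
keeps the matrix positive semidefinite, since `(t + 2y_c)²` is controlled by the edge terms
`(t + yᵢ + yⱼ)²`, and the degree of `c` together with triangle-freeness keeps the edge
inequalities. Hence `G` is LS₊-imperfect. A vertex outside an odd antihole with a non-neighbor `c`
in it raises the degree of `c` to `3`, and `c` lies on the complementary odd cycle.

If `STAB G` has a full-support facet, every non-isolated vertex of `H` lies on an odd closed walk:
otherwise its component is bipartite, and the `±1` vector of the bipartition is orthogonal to all
tight stable sets, which are edges and isolated vertices of `H`. If moreover `G` is LS₊-perfect,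
all degrees in `H` are therefore at most `2`, so each component of `H` with an edge is an odd cycle
of length at least `5`.
-/

section StableSets

open SimpleGraph

theorem stabilityNumber_eq_indepNum [Fintype V] (G : SimpleGraph V) :
    stabilityNumber G = G.indepNum := by
  simp only [stabilityNumber, indepNum, isNIndepSet_iff]
  rfl

theorem cliqueFree_compl_of_stabilityNumber_lt [Fintype V] {G : SimpleGraph V} {n : ℕ}
    (h : stabilityNumber G < n) : Gᶜ.CliqueFree n := by
  rw [cliqueFree_compl]
  intro S hS
  rw [stabilityNumber_eq_indepNum] at h
  exact absurd (hS.card_eq ▸ hS.isIndepSet.card_le_indepNum) h.not_ge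

theorem exists_compl_adj_of_one_lt_stabilityNumber [Fintype V] {G : SimpleGraph V}
    (h : 1 < stabilityNumber G) : ∃ v w, Gᶜ.Adj v w := by
  rw [stabilityNumber_eq_indepNum] at h
  obtain ⟨S, hS⟩ := G.exists_isNIndepSet_indepNum
  obtain ⟨v, hv, w, hw, hvw⟩ := one_lt_card.mp (hS.card_eq.symm ▸ h)
  exact ⟨v, w, (compl_adj G v w).mpr ⟨hvw, hS.isIndepSet hv hw hvw⟩⟩

theorem IsStableSet.card_lt {G : SimpleGraph V} {n : ℕ} (hG : Gᶜ.CliqueFree n) {S : Finset V}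
    (hS : IsStableSet G ↑S) : #S < n := by
  by_contra! hn
  exact hG.mono hn S ⟨(isClique_compl G).mpr hS, rfl⟩

theorem IsStableSet.mono {G : SimpleGraph V} {S T : Set V} (hT : IsStableSet G T) (hST : S ⊆ T) :
    IsStableSet G S :=
  Set.Pairwise.mono hST hT

theorem isStableSet_pair_iff [DecidableEq V] {G : SimpleGraph V} {v w : V} (hvw : v ≠ w) :
    IsStableSet G ↑({v, w} : Finset V) ↔ Gᶜ.Adj v w := by
  simp [IsStableSet, Set.pairwise_pair, compl_adj, hvw, G.adj_comm w v]

variable [Fintype V] [DecidableEq V] {G : SimpleGraph V}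

theorem indicator_mem_STAB {S : Finset V} (hS : IsStableSet G ↑S) :
    (fun i => if i ∈ S then (1 : ℝ) else 0) ∈ STAB G :=
  subset_convexHull ℝ _ ⟨S, hS, rfl⟩

theorem sum_mul_indicator (a : V → ℝ) (S : Finset V) :
    ∑ i, a i * (if i ∈ S then (1 : ℝ) else 0) = ∑ i ∈ S, a i := by
  simp

theorem sum_mul_le_of_mem_STAB {a : V → ℝ} {b : ℝ}
    (h : ∀ S : Finset V, IsStableSet G ↑S → ∑ i ∈ S, a i ≤ b) {x : V → ℝ} (hx : x ∈ STAB G) :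
    ∑ i, a i * x i ≤ b := by
  have hconvex : Convex ℝ {y : V → ℝ | a ⬝ᵥ y ≤ b} :=
    convex_halfSpace_le ⟨dotProduct_add a, fun r y => dotProduct_smul r a y⟩ b
  refine convexHull_min ?_ hconvex hx
  rintro _ ⟨S, hS, rfl⟩
  exact (sum_mul_indicator a S).trans_le (h S hS)

end StableSets

section LovaszSchrijver

theorem mk_mem_coneSet_ESTAB {G : SimpleGraph V} {t : ℝ} {x : V → ℝ} (ht : 0 ≤ t)
    (hx : ∀ i, 0 ≤ x i) (hxt : ∀ i, x i ≤ t) (hadj : ∀ i j, G.Adj i j → x i + x j ≤ t) :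
    (t, x) ∈ coneSet (ESTAB G) := by
  rcases ht.eq_or_lt with rfl | hpos
  · obtain rfl : x = 0 := funext fun i => le_antisymm (hxt i) (hx i)
    exact ⟨0, 0, le_rfl, by simp [ESTAB], by simp⟩
  · refine ⟨t, t⁻¹ • x, ht, ⟨fun i => ⟨?_, ?_⟩, fun i j hij => ?_⟩, ?_⟩
    · exact mul_nonneg (inv_nonneg.mpr ht) (hx i)
    · exact (inv_mul_le_one₀ hpos).mpr (hxt i)
    · simpa only [Pi.smul_apply, smul_eq_mul, ← mul_add] using
        (inv_mul_le_one₀ hpos).mpr (hadj i j hij)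
    · rw [smul_inv_smul₀ hpos.ne']

theorem smul_mem_coneSet {K : Set (V → ℝ)} {p : ℝ × (V → ℝ)} (hp : p ∈ coneSet K) {r : ℝ}
    (hr : 0 ≤ r) : r • p ∈ coneSet K := by
  obtain ⟨t, y, ht, hy, rfl⟩ := hp
  exact ⟨r * t, y, mul_nonneg hr ht, hy, by simp [mul_smul]⟩

variable [Fintype V] [DecidableEq V]

theorem smul_mem_Mplus {K : Set (V → ℝ)} {Y : Matrix (Option V) (Option V) ℝ}
    (hY : Y ∈ Mplus K) {r : ℝ} (hr : 0 ≤ r) : r • Y ∈ Mplus K := by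
  obtain ⟨hpsd, hdiag, hcol, hcompl⟩ := hY
  refine ⟨hpsd.smul hr, fun i => congrArg (r * ·) (hdiag i), fun i => ?_, fun i => ?_⟩
  · exact smul_mem_coneSet (hcol i) hr
  · simp only [Matrix.smul_apply, smul_eq_mul, ← mul_sub]
    exact smul_mem_coneSet (hcompl i) hr

theorem inv_mul_mem_LSplus {K : Set (V → ℝ)} {Y : Matrix (Option V) (Option V) ℝ}
    (hY : Y ∈ Mplus K) (hpos : 0 < Y none none) :
    (fun i => (Y none none)⁻¹ * Y (some i) none) ∈ LSplus K :=
  ⟨(Y none none)⁻¹ • Y, smul_mem_Mplus hY (inv_nonneg.mpr hpos.le), inv_mul_cancel₀ hpos.ne',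
    fun _ => rfl⟩

theorem LSplus_ne_STAB_of_mem_Mplus {G : SimpleGraph V} {n : ℕ}
    (hn : ∀ S : Finset V, IsStableSet G ↑S → #S ≤ n) {K : Set (V → ℝ)}
    {Y : Matrix (Option V) (Option V) ℝ} (hY : Y ∈ Mplus K) (hpos : 0 < Y none none)
    (hlt : n * Y none none < ∑ i, Y (some i) none) : LSplus K ≠ STAB G := by
  intro heq
  have hle : ∑ i, 1 * ((Y none none)⁻¹ * Y (some i) none) ≤ n :=
    sum_mul_le_of_mem_STAB (fun S hS => by simpa using hn S hS) (heq ▸ inv_mul_mem_LSplus hY hpos)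
  simp only [one_mul, ← mul_sum] at hle
  exact hlt.not_ge ((inv_mul_le_iff₀ hpos).mp hle |>.trans_eq (mul_comm _ _))

end LovaszSchrijver

section AdjacencySums

open SimpleGraph

variable (H : SimpleGraph V) [DecidableRel H.Adj]

theorem sum_adjMatrix_le_card (i : V) (J : Finset V) : ∑ j ∈ J, H.adjMatrix ℝ i j ≤ #J := by
  simpa [adjMatrix_apply] using card_filter_le J _

theorem adjMatrix_nonneg (i j : V) : 0 ≤ H.adjMatrix ℝ i j := by
  rw [adjMatrix_apply]
  positivity

variable [Fintype V]

theorem sum_adjMatrix_eq_degree (i : V) : ∑ j, H.adjMatrix ℝ i j = H.degree i := by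
  simp [adjMatrix_apply, ← card_neighborFinset_eq_degree, neighborFinset_eq_filter]

theorem sum_sum_adjMatrix_mul_left (f : V → ℝ) :
    ∑ i, ∑ j, H.adjMatrix ℝ i j * f i = ∑ i, H.degree i * f i := by
  simp only [← sum_mul, sum_adjMatrix_eq_degree]

theorem sum_sum_adjMatrix_mul_right (f : V → ℝ) :
    ∑ i, ∑ j, H.adjMatrix ℝ i j * f j = ∑ i, H.degree i * f i := by
  rw [sum_comm, ← sum_sum_adjMatrix_mul_left]
  simp only [adjMatrix_apply, H.adj_comm]

theorem sum_degree_eq_two_mul_card_edgeFinset : ∑ i, (H.degree i : ℝ) = 2 * #H.edgeFinset := by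
  exact_mod_cast H.sum_degrees_eq_twice_card_edges

theorem sum_sum_adjMatrix_mul_add_sq (t : ℝ) (y : V → ℝ) :
    ∑ i, ∑ j, H.adjMatrix ℝ i j * (t + y i + y j) ^ 2 =
      2 * (#H.edgeFinset * t ^ 2 + 2 * t * ∑ i, H.degree i * y i + ∑ i, H.degree i * y i ^ 2 +
        ∑ i, ∑ j, H.adjMatrix ℝ i j * (y i * y j)) := by
  have hexpand : ∀ i j, H.adjMatrix ℝ i j * (t + y i + y j) ^ 2 =
      H.adjMatrix ℝ i j * (t ^ 2 + 2 * t * y i + y i ^ 2) +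
        H.adjMatrix ℝ i j * (2 * t * y j + y j ^ 2) +
        2 * (H.adjMatrix ℝ i j * (y i * y j)) := fun i j => by ring
  simp only [hexpand, sum_add_distrib, ← mul_sum (a := (2 : ℝ)),
    sum_sum_adjMatrix_mul_left H (fun i => t ^ 2 + 2 * t * y i + y i ^ 2),
    sum_sum_adjMatrix_mul_right H (fun j => 2 * t * y j + y j ^ 2)]
  simp only [mul_add, sum_add_distrib, ← sum_mul, sum_degree_eq_two_mul_card_edgeFinset]
  simp only [mul_left_comm _ (2 * t), ← mul_sum]
  ring

theorem sum_adjMatrix_le_degree (i : V) (J : Finset V) :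
    ∑ j ∈ J, H.adjMatrix ℝ i j ≤ H.degree i := by
  rw [← sum_adjMatrix_eq_degree]
  exact sum_le_univ_sum_of_nonneg (adjMatrix_nonneg H i)

variable {H} in
theorem sq_le_sum_sum_adjMatrix_mul_sq {i j : V} (hij : H.Adj i j) (f : V → V → ℝ) :
    f i j ^ 2 ≤ ∑ k, ∑ l, H.adjMatrix ℝ k l * f k l ^ 2 := by
  have hnonneg : ∀ k l, 0 ≤ H.adjMatrix ℝ k l * f k l ^ 2 := fun k l =>
    mul_nonneg (adjMatrix_nonneg H k l) (sq_nonneg _)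
  calc f i j ^ 2 = H.adjMatrix ℝ i j * f i j ^ 2 := by simp [adjMatrix_apply, hij]
    _ ≤ ∑ l, H.adjMatrix ℝ i l * f i l ^ 2 :=
      single_le_sum (fun l _ => hnonneg i l) (mem_univ j)
    _ ≤ ∑ k, ∑ l, H.adjMatrix ℝ k l * f k l ^ 2 :=
      single_le_sum (f := fun k => ∑ l, H.adjMatrix ℝ k l * f k l ^ 2)
        (fun k _ => sum_nonneg fun l _ => hnonneg k l) (mem_univ i)

theorem two_mul_sum_degree_add_sum_compl [DecidableEq V] (T : Finset V) :
    2 * ∑ i ∈ T, (H.degree i : ℝ) + ∑ i ∈ Tᶜ, ∑ j ∈ Tᶜ, H.adjMatrix ℝ i j =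
      2 * #H.edgeFinset + ∑ i ∈ T, ∑ j ∈ T, H.adjMatrix ℝ i j := by
  have hsplit : ∀ i, (H.degree i : ℝ) =
      ∑ j ∈ T, H.adjMatrix ℝ i j + ∑ j ∈ Tᶜ, H.adjMatrix ℝ i j := fun i => by
    rw [sum_add_sum_compl, sum_adjMatrix_eq_degree]
  have hcross : ∑ i ∈ Tᶜ, ∑ j ∈ T, H.adjMatrix ℝ i j = ∑ i ∈ T, ∑ j ∈ Tᶜ, H.adjMatrix ℝ i j := by
    simp only [adjMatrix_apply]
    rw [sum_comm]
    simp only [H.adj_comm]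
  rw [← sum_degree_eq_two_mul_card_edgeFinset, ← sum_add_sum_compl T]
  simp only [hsplit, sum_add_distrib]
  rw [hcross]
  ring

end AdjacencySums

section OddLoops

open SimpleGraph

theorem abs_sub_neg_one_pow_mul_le_of_walk {H : SimpleGraph V} {s : V → ℝ} {r : ℝ}
    (h : ∀ i j, H.Adj i j → |s i + s j| ≤ r) {u v : V} (p : H.Walk u v) :
    |s u - (-1) ^ p.length * s v| ≤ p.length * r := by
  induction p with
  | nil => simp
  | @cons u w v huw p ih =>
    calc |s u - (-1) ^ (p.length + 1) * s v|
        = |s u + s w - (s w - (-1) ^ p.length * s v)| := by congr 1; ring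
      _ ≤ |s u + s w| + |s w - (-1) ^ p.length * s v| := abs_sub _ _
      _ ≤ r + p.length * r := add_le_add (h u w huw) ih
      _ = ((p.length + 1 : ℕ) : ℝ) * r := by push_cast; ring

theorem two_mul_abs_le_of_odd_loop {H : SimpleGraph V} {s : V → ℝ} {r : ℝ}
    (h : ∀ i j, H.Adj i j → |s i + s j| ≤ r) {c : V} (p : H.Walk c c) (hp : Odd p.length) :
    2 * |s c| ≤ p.length * r := by
  have hwalk := abs_sub_neg_one_pow_mul_le_of_walk h p
  rwa [hp.neg_one_pow, neg_one_mul, sub_neg_eq_add, ← two_mul, abs_mul, abs_two] at hwalk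

theorem sq_add_two_mul_le_of_odd_loop [Fintype V] {H : SimpleGraph V} [DecidableRel H.Adj] {c : V}
    (p : H.Walk c c) (hp : Odd p.length) (t : ℝ) (y : V → ℝ) :
    (t + 2 * y c) ^ 2 ≤
      p.length ^ 2 * ∑ i, ∑ j, H.adjMatrix ℝ i j * (t + y i + y j) ^ 2 := by
  set F := ∑ i, ∑ j, H.adjMatrix ℝ i j * (t + y i + y j) ^ 2
  have hF : 0 ≤ F :=
    sum_nonneg fun i _ => sum_nonneg fun j _ => mul_nonneg (adjMatrix_nonneg H i j) (sq_nonneg _)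
  have hedge : ∀ i j, H.Adj i j → |(t / 2 + y i) + (t / 2 + y j)| ≤ √F := fun i j hij => by
    rw [show (t / 2 + y i) + (t / 2 + y j) = t + y i + y j by ring]
    exact Real.abs_le_sqrt (sq_le_sum_sum_adjMatrix_mul_sq hij fun i j => t + y i + y j)
  calc (t + 2 * y c) ^ 2 = (2 * |t / 2 + y c|) ^ 2 := by rw [mul_pow, sq_abs]; ring
    _ ≤ (p.length * √F) ^ 2 :=
      pow_le_pow_left₀ (by positivity) (two_mul_abs_le_of_odd_loop hedge p hp) 2
    _ = p.length ^ 2 * F := by rw [mul_pow, Real.sq_sqrt hF]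

theorem exists_adj_notMem_of_odd_loop {H : SimpleGraph V} (hH : H.CliqueFree 3) {c : V}
    [Fintype (H.neighborSet c)] (p : H.Walk c c) (hp : Odd p.length) {T : Finset V}
    (hT : #T ≤ H.degree c) (hc : c ∉ T) : ∃ i j, i ∉ T ∧ j ∉ T ∧ H.Adj i j := by
  classical
  by_contra! hcover
  have hN : H.neighborFinset c = T :=
    eq_of_subset_of_card_le (fun j hj => by
      by_contra hjT
      exact hcover c j hc hjT ((H.mem_neighborFinset c j).mp hj)) hT
  have hproper : ∀ {i j}, H.Adj i j → decide (i ∈ T) ≠ decide (j ∈ T) := fun {i j} hij => by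
    have hmem : ∀ k, k ∈ T ↔ H.Adj c k := fun k => by rw [← hN, mem_neighborFinset]
    have hindep : ¬(i ∈ T ∧ j ∈ T) := fun ⟨hi, hj⟩ =>
      hH _ (is3Clique_triple_iff.mpr ⟨(hmem i).mp hi, (hmem j).mp hj, hij⟩)
    have := hcover i j
    rw [ne_eq, decide_eq_decide]
    tauto
  have hcolor : H.Colorable 2 := (Coloring.mk (fun i => decide (i ∈ T)) hproper).colorable
  exact Nat.not_even_iff_odd.mpr hp (two_colorable_iff_forall_loop_even.mp hcolor c p)

theorem exists_alternating_of_forall_loop_even {H : SimpleGraph V} {v : V}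
    (heven : ∀ p : H.Walk v v, Even p.length) :
    ∃ c : V → ℝ, c v = 1 ∧ (∀ x y, H.Adj x y → c x + c y = 0) ∧
      ∀ u, u ≠ v → (∀ x, ¬H.Adj u x) → c u = 0 := by
  classical
  refine ⟨fun u => if H.Reachable v u then (-1) ^ H.dist v u else 0, by simp, fun x y hxy => ?_,
    fun u huv hu => if_neg fun hreach => ?_⟩
  · by_cases hx : H.Reachable v x
    · have hy : H.Reachable v y := hx.trans hxy.reachable
      obtain ⟨p, hp⟩ := hx.exists_walk_length_eq_dist
      obtain ⟨q, hq⟩ := hy.exists_walk_length_eq_dist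
      have hloop := heven ((p.concat hxy).append q.reverse)
      rw [Walk.length_append, Walk.length_concat, Walk.length_reverse, hp, hq] at hloop
      obtain ⟨hdx, hdy⟩ | ⟨hdx, hdy⟩ : Even (H.dist v x) ∧ Odd (H.dist v y) ∨
          Odd (H.dist v x) ∧ Even (H.dist v y) := by grind
      all_goals simp [hx, hy, hdx.neg_one_pow, hdy.neg_one_pow]
    · have hy : ¬H.Reachable v y := fun hy => hx (hy.trans hxy.symm.reachable)
      simp [hx, hy]
  · obtain ⟨p⟩ := hreach.symm
    cases p with
    | nil => exact huv rfl
    | cons hux _ => exact hu _ hux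

end OddLoops

section MomentMatrix

open SimpleGraph

variable [Fintype V] [DecidableEq V] (H : SimpleGraph V) [DecidableRel H.Adj] (c : V) (δ : ℝ)

/-- The degree vector of `H` with the coordinate of the vertex `c` lowered by `3δ/2`. -/
noncomputable def perturbedDegree (i : V) : ℝ :=
  H.degree i - if i = c then 3 / 2 * δ else 0

/-- The moment matrix `∑ S, μ S • z_S z_Sᵀ`, where `z_S` is the indicator vector of `S ∪ {none}`,
of the signed measure `μ` with mass `1` on every edge of `H`, `-3δ/2` on `{c}` and `δ/2` on `∅`.
When `H` is the complement of `G`, it serves as a certificate that `G` is LS₊-imperfect. -/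
noncomputable def perturbedMomentMatrix : Matrix (Option V) (Option V) ℝ
  | none, none => #H.edgeFinset - δ
  | none, some i => perturbedDegree H c δ i
  | some i, none => perturbedDegree H c δ i
  | some i, some j => if i = j then perturbedDegree H c δ i else H.adjMatrix ℝ i j

theorem sum_perturbedDegree_mul (f : V → ℝ) :
    ∑ i, perturbedDegree H c δ i * f i = ∑ i, H.degree i * f i - 3 / 2 * δ * f c := by
  simp [perturbedDegree, sub_mul, sum_sub_distrib]

theorem sum_perturbedDegree :
    ∑ i, perturbedDegree H c δ i = 2 * #H.edgeFinset - 3 / 2 * δ := by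
  simpa [sum_degree_eq_two_mul_card_edgeFinset] using
    sum_perturbedDegree_mul H c δ fun _ => 1

theorem perturbedMomentMatrix_mulVec_some (z : Option V → ℝ) (i : V) :
    (perturbedMomentMatrix H c δ).mulVec z (some i) =
      perturbedDegree H c δ i * (z none + z (some i)) + ∑ j, H.adjMatrix ℝ i j * z (some j) := by
  have hentry : ∀ j, perturbedMomentMatrix H c δ (some i) (some j) =
      (if i = j then perturbedDegree H c δ i else 0) + H.adjMatrix ℝ i j := fun j => by
    by_cases hij : i = j <;> simp [perturbedMomentMatrix, hij]
  simp only [Matrix.mulVec, dotProduct, Fintype.sum_option, hentry, add_mul, ite_mul, zero_mul,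
    sum_add_distrib, sum_ite_eq, mem_univ, if_true]
  simp only [perturbedMomentMatrix]
  ring

theorem dotProduct_perturbedMomentMatrix_mulVec (z : Option V → ℝ) :
    z ⬝ᵥ (perturbedMomentMatrix H c δ).mulVec z =
      (∑ i, ∑ j, H.adjMatrix ℝ i j * (z none + z (some i) + z (some j)) ^ 2) / 2 -
        δ * (3 / 2 * (z none + z (some c)) ^ 2 - z none ^ 2 / 2) := by
  have hnone : (perturbedMomentMatrix H c δ).mulVec z none =
      (#H.edgeFinset - δ) * z none + ∑ i, perturbedDegree H c δ i * z (some i) := by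
    simp [Matrix.mulVec, dotProduct, Fintype.sum_option, perturbedMomentMatrix]
  have hsome : ∑ i, z (some i) * (perturbedMomentMatrix H c δ).mulVec z (some i) =
      z none * ∑ i, perturbedDegree H c δ i * z (some i) +
        ∑ i, perturbedDegree H c δ i * z (some i) ^ 2 +
        ∑ i, ∑ j, H.adjMatrix ℝ i j * (z (some i) * z (some j)) := by
    simp only [perturbedMomentMatrix_mulVec_some, mul_sum, ← sum_add_distrib]
    refine sum_congr rfl fun i _ => ?_
    rw [mul_add, mul_sum]
    congr 1
    · ring
    · exact sum_congr rfl fun j _ => by ring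
  rw [dotProduct, Fintype.sum_option, hnone, hsome, sum_sum_adjMatrix_mul_add_sq]
  simp only [sum_perturbedDegree_mul H c δ fun i => z (some i),
    sum_perturbedDegree_mul H c δ fun i => z (some i) ^ 2]
  ring

theorem isHermitian_perturbedMomentMatrix : (perturbedMomentMatrix H c δ).IsHermitian := by
  refine Matrix.IsHermitian.ext fun i j => ?_
  match i, j with
  | none, none | none, some _ | some _, none => rfl
  | some i, some j =>
    by_cases hij : i = j
    · simp [hij]
    · simp [perturbedMomentMatrix, hij, Ne.symm hij, H.adj_comm]

variable {H c δ}

theorem posSemidef_perturbedMomentMatrix (p : H.Walk c c) (hp : Odd p.length) (hδ : 0 ≤ δ)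
    (hδp : 3 * p.length ^ 2 * δ ≤ 1) : (perturbedMomentMatrix H c δ).PosSemidef := by
  refine .of_dotProduct_mulVec_nonneg (isHermitian_perturbedMomentMatrix H c δ) fun z => ?_
  rw [star_trivial, dotProduct_perturbedMomentMatrix_mulVec, sub_nonneg]
  set t := z none
  set y := fun i => z (some i)
  set F := ∑ i, ∑ j, H.adjMatrix ℝ i j * (t + y i + y j) ^ 2
  have hF : 0 ≤ F :=
    sum_nonneg fun i _ => sum_nonneg fun j _ => mul_nonneg (adjMatrix_nonneg H i j) (sq_nonneg _)
  calc δ * (3 / 2 * (t + y c) ^ 2 - t ^ 2 / 2)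
      ≤ δ * (3 / 2 * (t + 2 * y c) ^ 2) := by
        gcongr
        nlinarith [sq_nonneg (t - 3 * (t + 2 * y c))]
    _ ≤ δ * (3 / 2 * (p.length ^ 2 * F)) := by
        gcongr
        exact sq_add_two_mul_le_of_odd_loop p hp t y
    _ = 3 * p.length ^ 2 * δ * (F / 2) := by ring
    _ ≤ F / 2 := mul_le_of_le_one_left (by positivity) hδp

theorem sum_adjMatrix_le_perturbedDegree (hc : 3 ≤ H.degree c) (hδ : δ ≤ 1 / 3) (i : V)
    {J : Finset V} (hJ : #J ≤ 2) : ∑ j ∈ J, H.adjMatrix ℝ i j ≤ perturbedDegree H c δ i := by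
  rw [perturbedDegree]
  split_ifs with hi
  · subst hi
    have hcard := sum_adjMatrix_le_card H i J
    have : (#J : ℝ) ≤ 2 := mod_cast hJ
    have : (3 : ℝ) ≤ H.degree i := mod_cast hc
    linarith
  · simpa using sum_adjMatrix_le_degree H i J

theorem two_mul_sum_perturbedDegree_sub_le (hH : H.CliqueFree 3) (hc : 3 ≤ H.degree c)
    (p : H.Walk c c) (hp : Odd p.length) (hδ : 0 ≤ δ) (hδ' : δ ≤ 1 / 3) {T : Finset V}
    (hT : #T ≤ 3) :
    2 * ∑ i ∈ T, perturbedDegree H c δ i - ∑ i ∈ T, ∑ j ∈ T, H.adjMatrix ℝ i j ≤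
      2 * (#H.edgeFinset - δ) := by
  have hdeg := two_mul_sum_degree_add_sum_compl H T
  have hrest : 0 ≤ ∑ i ∈ Tᶜ, ∑ j ∈ Tᶜ, H.adjMatrix ℝ i j :=
    sum_nonneg fun i _ => sum_nonneg fun j _ => adjMatrix_nonneg H i j
  simp only [perturbedDegree, sum_sub_distrib, sum_ite_eq']
  split_ifs with hcT
  · linarith
  · obtain ⟨i, j, hi, hj, hij⟩ := exists_adj_notMem_of_odd_loop hH p hp (hT.trans hc) hcT
    have hmiss : (1 : ℝ) ≤ ∑ i ∈ Tᶜ, ∑ j ∈ Tᶜ, H.adjMatrix ℝ i j :=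
      calc (1 : ℝ) = H.adjMatrix ℝ i j := by simp [adjMatrix_apply, hij]
        _ ≤ ∑ j ∈ Tᶜ, H.adjMatrix ℝ i j :=
          single_le_sum (f := fun j => H.adjMatrix ℝ i j)
            (fun j _ => adjMatrix_nonneg H i j) (mem_compl.mpr hj)
        _ ≤ ∑ i ∈ Tᶜ, ∑ j ∈ Tᶜ, H.adjMatrix ℝ i j :=
          single_le_sum (f := fun i => ∑ j ∈ Tᶜ, H.adjMatrix ℝ i j)
            (fun i _ => sum_nonneg fun j _ => adjMatrix_nonneg H i j) (mem_compl.mpr hi)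
    linarith

theorem adjMatrix_le_perturbedDegree (hc : 3 ≤ H.degree c) (hδ : δ ≤ 1 / 3) (i j : V) :
    H.adjMatrix ℝ i j ≤ perturbedDegree H c δ i := by
  simpa only [sum_singleton] using
    sum_adjMatrix_le_perturbedDegree hc hδ i (J := {j}) (by simp)

theorem sum_perturbedDegree_sub_adjMatrix_le (hH : H.CliqueFree 3) (hc : 3 ≤ H.degree c)
    (p : H.Walk c c) (hp : Odd p.length) (hδ : 0 ≤ δ) (hδ' : δ ≤ 1 / 3) {i : V} {J : Finset V}
    (hJ : #J ≤ 2) (hi : i ∉ J) (hindep : ∀ j ∈ J, ∀ k ∈ J, ¬H.Adj j k) :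
    ∑ j ∈ J, (perturbedDegree H c δ j - H.adjMatrix ℝ j i) ≤
      #H.edgeFinset - δ - perturbedDegree H c δ i := by
  have hcard : #(insert i J) ≤ 3 := (card_insert_le i J).trans (by omega)
  have hcover := two_mul_sum_perturbedDegree_sub_le hH hc p hp hδ hδ' hcard
  have hzero : ∑ j ∈ J, ∑ k ∈ J, H.adjMatrix ℝ j k = 0 :=
    sum_eq_zero fun j hj => sum_eq_zero fun k hk => by simp [adjMatrix_apply, hindep j hj k hk]
  have hsymm : ∑ j ∈ J, H.adjMatrix ℝ i j = ∑ j ∈ J, H.adjMatrix ℝ j i := by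
    simp only [adjMatrix_apply, H.adj_comm]
  have hdiag : H.adjMatrix ℝ i i = 0 := by simp [adjMatrix_apply]
  simp only [sum_insert hi, sum_add_distrib, hzero, hsymm, hdiag] at hcover
  rw [sum_sub_distrib]
  linarith

end MomentMatrix

section Imperfection

open SimpleGraph

variable [Fintype V] [DecidableEq V] {G : SimpleGraph V} [DecidableRel G.Adj] {c : V} {δ : ℝ}

theorem perturbedMomentMatrix_col_mem_coneSet (hc : 3 ≤ Gᶜ.degree c) (hδ : δ ≤ 1 / 3) (i : V) :
    (perturbedMomentMatrix Gᶜ c δ none (some i),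
      fun j => perturbedMomentMatrix Gᶜ c δ (some j) (some i)) ∈ coneSet (ESTAB G) := by
  have hnonneg : ∀ j, 0 ≤ perturbedDegree Gᶜ c δ j := fun j =>
    (adjMatrix_nonneg Gᶜ j j).trans (adjMatrix_le_perturbedDegree hc hδ j j)
  refine mk_mem_coneSet_ESTAB (hnonneg i) (fun j => ?_) (fun j => ?_) fun j k hjk => ?_
  · simp only [perturbedMomentMatrix]
    split_ifs
    exacts [hnonneg j, adjMatrix_nonneg Gᶜ j i]
  · simp only [perturbedMomentMatrix]
    split_ifs with hji
    · rw [hji]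
    · simpa only [adjMatrix_apply, adj_comm] using adjMatrix_le_perturbedDegree hc hδ i j
  · have hpair := sum_adjMatrix_le_perturbedDegree hc hδ i (J := {j, k}) card_le_two
    rw [sum_pair hjk.ne] at hpair
    simp only [perturbedMomentMatrix]
    split_ifs with hji hki hki
    · exact absurd (hji.trans hki.symm) hjk.ne
    · simp [← hji, hjk.symm]
    · simp [← hki, hjk]
    · simpa only [adjMatrix_apply, adj_comm] using hpair

theorem perturbedMomentMatrix_compl_col_mem_coneSet (hG : Gᶜ.CliqueFree 3)
    (hc : 3 ≤ Gᶜ.degree c) (p : Gᶜ.Walk c c) (hp : Odd p.length) (hδ : 0 ≤ δ) (hδ' : δ ≤ 1 / 3)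
    (i : V) :
    (perturbedMomentMatrix Gᶜ c δ none none - perturbedMomentMatrix Gᶜ c δ none (some i),
      fun j => perturbedMomentMatrix Gᶜ c δ (some j) none -
        perturbedMomentMatrix Gᶜ c δ (some j) (some i)) ∈ coneSet (ESTAB G) := by
  have hcover : ∀ {J : Finset V}, #J ≤ 2 → i ∉ J → (∀ j ∈ J, ∀ k ∈ J, ¬Gᶜ.Adj j k) →
      ∑ j ∈ J, (perturbedDegree Gᶜ c δ j - Gᶜ.adjMatrix ℝ j i) ≤
        #Gᶜ.edgeFinset - δ - perturbedDegree Gᶜ c δ i :=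
    sum_perturbedDegree_sub_adjMatrix_le hG hc p hp hδ hδ'
  have hnonneg : 0 ≤ #Gᶜ.edgeFinset - δ - perturbedDegree Gᶜ c δ i := by
    simpa using hcover (J := ∅)
  have hsingle : ∀ j, j ≠ i → perturbedDegree Gᶜ c δ j - Gᶜ.adjMatrix ℝ j i ≤
      #Gᶜ.edgeFinset - δ - perturbedDegree Gᶜ c δ i := fun j hji => by
    simpa only [sum_singleton] using hcover (J := {j}) (by simp) (by simpa using hji.symm) (by simp)
  simp only [perturbedMomentMatrix]
  refine mk_mem_coneSet_ESTAB hnonneg (fun j => ?_) (fun j => ?_) fun j k hjk => ?_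
  · split_ifs with hji
    · simp
    · exact sub_nonneg.mpr (adjMatrix_le_perturbedDegree hc hδ' j i)
  · split_ifs with hji
    · simpa using hnonneg
    · exact hsingle j hji
  · split_ifs with hji hki hki
    · simpa using hnonneg
    · simpa using hsingle k hki
    · simpa using hsingle j hji
    · have hpair := hcover (J := {j, k}) card_le_two (by simp [Ne.symm hji, Ne.symm hki])
        (by simp [compl_adj, hjk, hjk.symm])
      rwa [sum_pair hjk.ne] at hpair

theorem perturbedMomentMatrix_mem_Mplus (hG : Gᶜ.CliqueFree 3) (hc : 3 ≤ Gᶜ.degree c)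
    (p : Gᶜ.Walk c c) (hp : Odd p.length) (hδ : 0 ≤ δ) (hδp : 3 * p.length ^ 2 * δ ≤ 1) :
    perturbedMomentMatrix Gᶜ c δ ∈ Mplus (ESTAB G) := by
  have hlength : (1 : ℝ) ≤ p.length ^ 2 := one_le_pow₀ (mod_cast hp.pos)
  have hδ' : δ ≤ 1 / 3 := by nlinarith
  refine ⟨posSemidef_perturbedMomentMatrix p hp hδ hδp, fun i => ?_,
    perturbedMomentMatrix_col_mem_coneSet hc hδ',
    perturbedMomentMatrix_compl_col_mem_coneSet hG hc p hp hδ hδ'⟩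
  cases i <;> simp [perturbedMomentMatrix]

theorem LSplus_ne_STAB_of_odd_loop (hG : Gᶜ.CliqueFree 3) (hc : 3 ≤ Gᶜ.degree c)
    (p : Gᶜ.Walk c c) (hp : Odd p.length) : LSplus (ESTAB G) ≠ STAB G := by
  set δ : ℝ := (3 * p.length ^ 2)⁻¹
  have hlength : (1 : ℝ) ≤ p.length ^ 2 := one_le_pow₀ (mod_cast hp.pos)
  have hδp : 3 * p.length ^ 2 * δ = 1 := mul_inv_cancel₀ (by positivity)
  have hδ : 0 < δ := by positivity
  have hδ' : δ ≤ 1 := inv_le_one_of_one_le₀ (by linarith)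
  have hedges : (3 : ℝ) ≤ #Gᶜ.edgeFinset := mod_cast hc.trans (Gᶜ.degree_le_card_edgeFinset c)
  have hY : perturbedMomentMatrix Gᶜ c δ ∈ Mplus (ESTAB G) :=
    perturbedMomentMatrix_mem_Mplus hG hc p hp hδ.le hδp.le
  refine LSplus_ne_STAB_of_mem_Mplus (n := 2)
    (fun S hS => Nat.le_of_lt_succ (hS.card_lt hG)) hY ?_ ?_
  · simp only [perturbedMomentMatrix]
    linarith
  · simp only [perturbedMomentMatrix, sum_perturbedDegree]
    push_cast
    linarith

end Imperfection

section PartialNeighbor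

open SimpleGraph

theorem exists_walk_of_forall_adj_succ {H : SimpleGraph V} {g : ℕ → V}
    (hg : ∀ n, H.Adj (g n) (g (n + 1))) (n : ℕ) : ∃ p : H.Walk (g 0) (g n), p.length = n := by
  induction n with
  | zero => exact ⟨.nil, rfl⟩
  | succ n ih =>
    obtain ⟨p, hp⟩ := ih
    exact ⟨p.concat (hg n), by rw [Walk.length_concat, hp]⟩

theorem natCast_zmod_ne_zero {m n : ℕ} (hm : m ≠ 0) (hmn : m < n) : (m : ZMod n) ≠ 0 := by
  rw [Ne, ZMod.natCast_eq_zero_iff]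
  exact Nat.not_dvd_of_pos_of_lt (Nat.pos_of_ne_zero hm) hmn

/-- The vertices `u a` of `G`, indexed by `ZMod (2 * k + 1)`, induce an odd antihole whose
non-edges join indices at distance `k`, so that the complementary cycle visits them in steps
of `k`. -/
def IsOddAntiholeEmbedding (G : SimpleGraph V) {k : ℕ} (u : ZMod (2 * k + 1) → V) : Prop :=
  Function.Injective u ∧ ∀ a b, a ≠ b → (G.Adj (u a) (u b) ↔
    (a - b ≠ (k : ZMod (2 * k + 1)) ∧ b - a ≠ (k : ZMod (2 * k + 1))))

namespace IsOddAntiholeEmbedding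

variable {G : SimpleGraph V} {k : ℕ} {u : ZMod (2 * k + 1) → V}

theorem compl_adj_add (hu : IsOddAntiholeEmbedding G u) (hk : k ≠ 0) (a : ZMod (2 * k + 1)) :
    Gᶜ.Adj (u a) (u (a + k)) := by
  have hne : a ≠ a + k := by
    simpa using natCast_zmod_ne_zero hk (show k < 2 * k + 1 by omega)
  rw [compl_adj, hu.2 _ _ hne]
  exact ⟨hu.1.ne hne, by simp⟩

theorem exists_odd_loop (hu : IsOddAntiholeEmbedding G u) (hk : k ≠ 0)
    (a : ZMod (2 * k + 1)) : ∃ p : Gᶜ.Walk (u a) (u a), Odd p.length := by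
  have hstep : ∀ n : ℕ, Gᶜ.Adj (u (a + n * k)) (u (a + (n + 1 : ℕ) * k)) := fun n => by
    simpa [add_mul, add_assoc] using hu.compl_adj_add hk (a + n * k)
  obtain ⟨p, hp⟩ := exists_walk_of_forall_adj_succ hstep (2 * k + 1)
  have hstart : u (a + (0 : ℕ) * k) = u a := by simp
  have hend : u (a + (2 * k + 1 : ℕ) * k) = u a := by rw [ZMod.natCast_self]; simp
  exact ⟨p.copy hstart hend, by rw [Walk.length_copy, hp]; exact odd_two_mul_add_one k⟩

theorem three_le_compl_degree [Fintype V] [DecidableEq V] [DecidableRel G.Adj]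
    (hu : IsOddAntiholeEmbedding G u) (hk : k ≠ 0) {w : V} (hw : w ∉ Set.range u)
    {a : ZMod (2 * k + 1)} (ha : ¬G.Adj w (u a)) : 3 ≤ Gᶜ.degree (u a) := by
  have hwu : ∀ b, w ≠ u b := fun b h => hw ⟨b, h.symm⟩
  have hne : a + k ≠ a - k := fun h => by
    have htwo : ((2 * k : ℕ) : ZMod (2 * k + 1)) = 0 := by
      push_cast
      linear_combination h
    exact natCast_zmod_ne_zero (by omega) (Nat.lt_succ_self _) htwo
  rw [← card_neighborFinset_eq_degree]
  refine two_lt_card.mpr ⟨u (a + k), ?_, u (a - k), ?_, w, ?_, hu.1.ne hne, (hwu _).symm,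
    (hwu _).symm⟩ <;> rw [mem_neighborFinset]
  · exact hu.compl_adj_add hk a
  · simpa using (hu.compl_adj_add hk (a - k)).symm
  · exact (compl_adj G _ _).mpr ⟨(hwu a).symm, fun h => ha h.symm⟩

theorem LSplus_ne_STAB [Fintype V] [DecidableEq V]
    (hu : IsOddAntiholeEmbedding G u) (hk : k ≠ 0) (hG : Gᶜ.CliqueFree 3) {w : V}
    (hw : w ∉ Set.range u) (hna : ∃ a, ¬G.Adj w (u a)) : LSplus (ESTAB G) ≠ STAB G := by
  classical
  obtain ⟨a, ha⟩ := hna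
  obtain ⟨p, hp⟩ := hu.exists_odd_loop hk a
  exact LSplus_ne_STAB_of_odd_loop hG (hu.three_le_compl_degree hk hw ha) p hp

theorem codRestrict (hu : IsOddAntiholeEmbedding G u) {s : Set V} (hs : ∀ a, u a ∈ s) :
    IsOddAntiholeEmbedding (G.induce s) (Set.codRestrict u s hs) :=
  ⟨hu.1.codRestrict hs, hu.2⟩

theorem exists_induce_LSplus_ne_STAB [DecidableEq V] (hu : IsOddAntiholeEmbedding G u)
    (hk : k ≠ 0) (hG : Gᶜ.CliqueFree 3) {w : V} (hw : w ∉ Set.range u)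
    (hna : ∃ a, ¬G.Adj w (u a)) :
    ∃ T : Finset V, LSplus (ESTAB (G.induce (T : Set V))) ≠ STAB (G.induce (T : Set V)) := by
  set T : Finset V := insert w (univ.image u)
  have huT : ∀ a, u a ∈ (T : Set V) := fun a => by simp [T]
  have hwT : w ∈ (T : Set V) := by simp [T]
  have hTfree : (G.induce (T : Set V))ᶜ.CliqueFree 3 :=
    hG.comap (Embedding.complEquiv (Embedding.induce (T : Set V))).toCopy.isContained
  refine ⟨T, (hu.codRestrict huT).LSplus_ne_STAB hk hTfree (w := ⟨w, hwT⟩) ?_ hna⟩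
  rintro ⟨a, ha⟩
  exact hw ⟨a, congrArg Subtype.val ha⟩

end IsOddAntiholeEmbedding

end PartialNeighbor

section Facets

/-- `a ⬝ᵥ x ≤ b` is a facet-defining inequality of `STAB G` with positive coefficients. That its
face is a facet is expressed dually: a linear functional vanishing on all tight stable sets is
zero. -/
structure IsPositiveFacet (G : SimpleGraph V) (a : V → ℝ) (b : ℝ) : Prop where
  pos : ∀ i, 0 < a i
  sum_le : ∀ S : Finset V, IsStableSet G ↑S → ∑ i ∈ S, a i ≤ b
  eq_zero : ∀ c : V → ℝ,
    (∀ S : Finset V, IsStableSet G ↑S → ∑ i ∈ S, a i = b → ∑ i ∈ S, c i = 0) → c = 0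

theorem linearIndependent_of_affineIndependent_of_apply_eq {ι k E : Type*} [Field k]
    [AddCommGroup E] [Module k E] {f : ι → E} (hf : AffineIndependent k f) (φ : E →ₗ[k] k) {b : k}
    (hb : b ≠ 0) (hφ : ∀ i, φ (f i) = b) : LinearIndependent k f := by
  rw [linearIndependent_iff']
  intro s g hg
  have hsum : (∑ i ∈ s, g i) * b = 0 := by
    simpa [map_sum, hφ, sum_mul] using congrArg φ hg
  exact affineIndependent_iff.mp hf s g ((mul_eq_zero_iff_right hb).mp hsum) hg

theorem eq_zero_of_forall_sum_mul_eq_zero [Fintype V] {a c : V → ℝ} {b : ℝ} (hb : b ≠ 0)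
    {f : Fin (Fintype.card V) → V → ℝ} (hf : AffineIndependent ℝ f)
    (ha : ∀ m, ∑ i, a i * f m i = b) (hc : ∀ m, ∑ i, c i * f m i = 0) : c = 0 := by
  have hli : LinearIndependent ℝ f :=
    linearIndependent_of_affineIndependent_of_apply_eq hf (dotProductBilin ℝ ℝ a) hb ha
  have hspan : Submodule.span ℝ (Set.range f) = ⊤ :=
    hli.span_eq_top_of_card_eq_finrank' (by simp)
  have hzero : dotProductBilin ℝ ℝ c = 0 :=
    LinearMap.ext_on_range hspan hc
  exact dotProduct_eq_zero c fun x => LinearMap.congr_fun hzero x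

variable [Fintype V] [DecidableEq V] {G : SimpleGraph V}

theorem sum_mul_nonpos_of_tight {a c : V → ℝ} {b : ℝ}
    (ha : ∀ S : Finset V, IsStableSet G ↑S → ∑ i ∈ S, a i ≤ b)
    (hc : ∀ S : Finset V, IsStableSet G ↑S → ∑ i ∈ S, a i = b → ∑ i ∈ S, c i = 0)
    {x : V → ℝ} (hx : x ∈ STAB G) (hxb : ∑ i, a i * x i = b) : ∑ i, c i * x i ≤ 0 := by
  -- Adding a large multiple of `a ⬝ᵥ x ≤ b` makes `c ⬝ᵥ x ≤ 0` valid on every stable set; at tight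
  -- sets the quotient below is the junk value `0`, but there both sides are equal by assumption.
  obtain ⟨M, hM⟩ := (Set.finite_range fun S : Finset V =>
    (∑ i ∈ S, c i) / (b - ∑ i ∈ S, a i)).bddAbove
  have hcM : ∀ S : Finset V, IsStableSet G ↑S → ∑ i ∈ S, (c i + M * a i) ≤ M * b := fun S hS => by
    rw [sum_add_distrib, ← mul_sum]
    rcases (ha S hS).eq_or_lt with heq | hlt
    · rw [hc S hS heq, heq, zero_add]
    · have := (div_le_iff₀ (sub_pos.mpr hlt)).mp (hM ⟨S, rfl⟩)
      linarith
  have hxM := sum_mul_le_of_mem_STAB hcM hx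
  simp only [add_mul, sum_add_distrib, mul_assoc, ← mul_sum, hxb] at hxM
  linarith

theorem sum_mul_eq_zero_of_tight {a c : V → ℝ} {b : ℝ}
    (ha : ∀ S : Finset V, IsStableSet G ↑S → ∑ i ∈ S, a i ≤ b)
    (hc : ∀ S : Finset V, IsStableSet G ↑S → ∑ i ∈ S, a i = b → ∑ i ∈ S, c i = 0)
    {x : V → ℝ} (hx : x ∈ STAB G) (hxb : ∑ i, a i * x i = b) : ∑ i, c i * x i = 0 := by
  refine le_antisymm (sum_mul_nonpos_of_tight ha hc hx hxb) ?_
  have hneg := sum_mul_nonpos_of_tight (c := -c) ha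
    (fun S hS hSb => by simpa using hc S hS hSb) hx hxb
  simpa using hneg

theorem apply_eq_zero_of_tight_of_neg {a : V → ℝ} {b : ℝ}
    (ha : ∀ S : Finset V, IsStableSet G ↑S → ∑ i ∈ S, a i ≤ b) {i : V} (hi : a i < 0)
    {x : V → ℝ} (hx : x ∈ STAB G) (hxb : ∑ i, a i * x i = b) : x i = 0 := by
  have htight : ∀ S : Finset V, IsStableSet G ↑S → ∑ j ∈ S, a j = b →
      ∑ j ∈ S, (Pi.single i 1 : V → ℝ) j = 0 := fun S hS hSb => by
    have hiS : i ∉ S := fun hiS => by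
      have herase := ha (S.erase i) (hS.mono (coe_subset.mpr (erase_subset i S)))
      linarith [sum_erase_add S a hiS]
    simp [hiS]
  simpa [Pi.single_apply] using sum_mul_eq_zero_of_tight ha htight hx hxb

theorem HasFullSupportFacet.exists_isPositiveFacet [Nontrivial V] (hF : HasFullSupportFacet G) :
    ∃ a b, IsPositiveFacet G a b := by
  obtain ⟨a, b, hsupp, hvalid, f, hf, hfacet⟩ := hF
  have hle : ∀ S : Finset V, IsStableSet G ↑S → ∑ i ∈ S, a i ≤ b := fun S hS =>
    (sum_mul_indicator a S).symm.trans_le (hvalid _ (indicator_mem_STAB hS))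
  have hneg : ∀ i, a i < 0 → ∀ m, f m i = 0 := fun i hi m =>
    apply_eq_zero_of_tight_of_neg hle hi (hfacet m).1 (hfacet m).2
  have hb : b ≠ 0 := by
    rintro rfl
    have hall : ∀ i, a i < 0 := fun i =>
      lt_of_le_of_ne (by simpa using hle {i} (by simp [IsStableSet])) (hsupp i)
    have hcard : 1 < Fintype.card (Fin (Fintype.card V)) := by
      simpa using Fintype.one_lt_card (α := V)
    obtain ⟨m, n, hmn⟩ := Fintype.exists_pair_of_one_lt_card hcard
    exact hmn (hf.injective (funext fun i => by rw [hneg i (hall i), hneg i (hall i)]))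
  have hdual : ∀ c : V → ℝ, (∀ m, ∑ i, c i * f m i = 0) → c = 0 := fun c =>
    eq_zero_of_forall_sum_mul_eq_zero hb hf fun m => (hfacet m).2
  refine ⟨a, b, fun i => ?_, hle, fun c hc => hdual c fun m =>
    sum_mul_eq_zero_of_tight hle hc (hfacet m).1 (hfacet m).2⟩
  by_contra hi
  have hsingle := hdual (Pi.single i 1) fun m => by
    simpa [Pi.single_apply] using hneg i (lt_of_le_of_ne (not_lt.mp hi) (hsupp i)) m
  simpa using congrFun hsingle i

end Facets

namespace IsPositiveFacet

variable {G : SimpleGraph V} {a : V → ℝ} {b : ℝ}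

theorem eq_zero_of_alternating (h : IsPositiveFacet G a b) (hG : Gᶜ.CliqueFree 3) {c : V → ℝ}
    (hadj : ∀ v w, Gᶜ.Adj v w → c v + c w = 0)
    (hisol : ∀ v, (∀ w, ¬Gᶜ.Adj v w) → c v = 0) : c = 0 := by
  classical
  refine h.eq_zero c fun S hS hSb => ?_
  have hcard : #S = 0 ∨ #S = 1 ∨ #S = 2 := by have := hS.card_lt hG; omega
  rcases hcard with hS0 | hS1 | hS2
  · simp [card_eq_zero.mp hS0]
  · obtain ⟨v, rfl⟩ := card_eq_one.mp hS1
    rw [sum_singleton] at hSb ⊢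
    refine hisol v fun w hvw => ?_
    have hpair := h.sum_le {v, w} ((isStableSet_pair_iff hvw.ne).mpr hvw)
    rw [sum_pair hvw.ne] at hpair
    linarith [h.pos w]
  · obtain ⟨v, w, hvw, rfl⟩ := card_eq_two.mp hS2
    rw [sum_pair hvw]
    exact hadj v w ((isStableSet_pair_iff hvw).mp hS)

theorem exists_odd_loop (h : IsPositiveFacet G a b) (hG : Gᶜ.CliqueFree 3) {v w : V}
    (hvw : Gᶜ.Adj v w) : ∃ p : Gᶜ.Walk v v, Odd p.length := by
  by_contra! hodd
  obtain ⟨c, hcv, hadj, hisol⟩ := exists_alternating_of_forall_loop_even fun p =>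
    Nat.not_odd_iff_even.mp (hodd p)
  have hc : c = 0 := h.eq_zero_of_alternating hG hadj fun u hu =>
    hisol u (by rintro rfl; exact hu w hvw) hu
  exact one_ne_zero (hcv.symm.trans (congrFun hc v))

theorem compl_degree_le_two [Fintype V] [DecidableEq V] [DecidableRel G.Adj]
    (h : IsPositiveFacet G a b) (hG : Gᶜ.CliqueFree 3) (hLS : LSplus (ESTAB G) = STAB G) (v : V) :
    Gᶜ.degree v ≤ 2 := by
  by_contra! hv
  obtain ⟨w, hvw⟩ := Gᶜ.degree_pos_iff_exists_adj v |>.mp (by omega)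
  obtain ⟨p, hp⟩ := h.exists_odd_loop hG hvw
  exact LSplus_ne_STAB_of_odd_loop hG hv p hp hLS

end IsPositiveFacet

section OddCycles

open SimpleGraph

variable {H : SimpleGraph V}

theorem even_length_add_length_bypass [DecidableEq V]
    (hH : ∀ u (q : H.Walk u u), q.IsCycle → Even q.length) {v w : V} (p : H.Walk v w) :
    Even (p.length + p.bypass.length) := by
  induction p with
  | nil => simp [Walk.bypass]
  | @cons u x w hux p ih =>
    rw [Walk.bypass]
    split_ifs with hu
    · have hsplit : (p.bypass.takeUntil u hu).length + (p.bypass.dropUntil u hu).length =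
          p.bypass.length := by
        rw [← Walk.length_append, Walk.take_spec]
      have hpath : (p.bypass.takeUntil u hu).IsPath := p.bypass_isPath.takeUntil hu
      have htake : Odd (p.bypass.takeUntil u hu).length := by
        by_cases hedge : s(x, u) ∈ (p.bypass.takeUntil u hu).edges
        · rw [hpath.length_eq_one_of_mem_edges hedge]
          exact odd_one
        · have hcycle : (Walk.cons hux (p.bypass.takeUntil u hu)).IsCycle :=
            (Walk.cons_isCycle_iff _ _).mpr ⟨hpath, by rwa [Sym2.eq_swap]⟩
          simpa [Nat.even_add_one] using hH u _ hcycle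
      rw [Walk.length_cons]
      grind
    · rw [Walk.length_cons, Walk.length_cons]
      grind

theorem exists_odd_isCycle_of_odd_loop {v : V} (p : H.Walk v v) (hp : Odd p.length) :
    ∃ u, ∃ q : H.Walk u u, q.IsCycle ∧ Odd q.length := by
  classical
  by_contra! hH
  have hbypass := even_length_add_length_bypass
    (fun u q hq => Nat.not_odd_iff_even.mp (hH u q hq)) p
  rw [Walk.length_eq_zero_iff.mpr (Walk.isPath_iff_nil.mp p.bypass_isPath), add_zero] at hbypass
  exact Nat.not_odd_iff_even.mpr hbypass hp

section Copies

variable {W : Type*} {A : SimpleGraph W}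

theorem exists_adj_of_copy_adj_of_degree_le (f : Copy A H) {a : W} [Fintype (A.neighborSet a)]
    [Fintype (H.neighborSet (f a))] (hdeg : H.degree (f a) ≤ A.degree a) {v : V}
    (hv : H.Adj (f a) v) : ∃ b, A.Adj a b ∧ f b = v := by
  have hsurj : Function.Surjective (f.mapNeighborSet a) :=
    ((f.mapNeighborSet a).injective.bijective_of_nat_card_le (by
      rwa [Nat.card_eq_fintype_card, Nat.card_eq_fintype_card, card_neighborSet_eq_degree,
        card_neighborSet_eq_degree])).surjective
  obtain ⟨⟨b, hb⟩, hbv⟩ := hsurj ⟨v, hv⟩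
  exact ⟨b, hb, congrArg Subtype.val hbv⟩

theorem nonempty_iso_of_copy_of_degree_le [Nonempty W] [A.LocallyFinite] [H.LocallyFinite]
    (hH : H.Preconnected) (f : Copy A H) (hdeg : ∀ a, H.degree (f a) ≤ A.degree a) :
    Nonempty (A ≃g H) := by
  have hclosed : ∀ {u v}, H.Walk u v → u ∈ Set.range f → v ∈ Set.range f := by
    intro u v p
    induction p with
    | nil => exact id
    | cons hux _ ih =>
      rintro ⟨a, rfl⟩
      obtain ⟨b, -, hb⟩ := exists_adj_of_copy_adj_of_degree_le f (hdeg a) hux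
      exact ih ⟨b, hb⟩
  have hsurj : Function.Surjective f := fun v => by
    obtain ⟨a⟩ := ‹Nonempty W›
    obtain ⟨p⟩ := hH (f a) v
    exact hclosed p ⟨a, rfl⟩
  refine ⟨⟨Equiv.ofBijective f ⟨f.injective, hsurj⟩, fun {a b} => ⟨fun hab => ?_, f.toHom.map_adj⟩⟩⟩
  obtain ⟨c, hac, hcb⟩ := exists_adj_of_copy_adj_of_degree_le f (hdeg a) hab
  rwa [f.injective hcb] at hac

end Copies

theorem nonempty_cycleGraph_iso_cycleG (n : ℕ) :
    Nonempty (cycleGraph (n + 1) ≃g cycleG (n + 1)) := by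
  refine ⟨⟨(ZMod.finEquiv (n + 1)).toEquiv, fun {a b} => ?_⟩⟩
  have hstep : ∀ a b : Fin (n + 1),
      ZMod.finEquiv (n + 1) b = ZMod.finEquiv (n + 1) a + 1 ↔ b - a = 1 := fun a b => by
    rw [← map_one (ZMod.finEquiv (n + 1)), ← map_add, EquivLike.apply_eq_iff_eq,
      sub_eq_iff_eq_add']
  simp [cycleG, cycleGraph_eq_circulantGraph, circulantGraph, fromRel_adj, hstep, or_comm]

theorem exists_nonempty_iso_cycleG [H.LocallyFinite] (hconn : H.Preconnected)
    (hH : H.CliqueFree 3) (hdeg : ∀ v, H.degree v ≤ 2) {v : V} (p : H.Walk v v)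
    (hp : Odd p.length) : ∃ k, 2 ≤ k ∧ Nonempty (H ≃g cycleG (2 * k + 1)) := by
  obtain ⟨u, q, hcycle, k, hk⟩ := exists_odd_isCycle_of_odd_loop p hp
  have hthree := hcycle.three_le_length
  obtain ⟨f⟩ := (cycleGraph_isContained_iff hthree).mpr ⟨u, q, hcycle, rfl⟩
  have hne : q.length ≠ 3 := fun h => by
    rw [h, cycleGraph_three_eq_top] at f
    exact cliqueFree_iff_top_free.mp hH ⟨f⟩
  obtain ⟨n, hn⟩ := Nat.exists_eq_add_of_le' hthree
  rw [hn] at f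
  obtain ⟨e⟩ := nonempty_iso_of_copy_of_degree_le hconn f fun a =>
    (hdeg _).trans_eq cycleGraph_degree_three_le.symm
  obtain ⟨e'⟩ := nonempty_cycleGraph_iso_cycleG (n + 2)
  refine ⟨k, by omega, ?_⟩
  rw [← hk, hn]
  exact ⟨e.symm.trans e'⟩

end OddCycles

section Components

open SimpleGraph

theorem exists_component_iso_cycleG {H : SimpleGraph V} [H.LocallyFinite] (hH : H.CliqueFree 3)
    (hdeg : ∀ v, H.degree v ≤ 2) (C : H.ConnectedComponent) {v : V} (hv : v ∈ C.supp)
    (p : H.Walk v v) (hp : Odd p.length) :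
    ∃ k, 2 ≤ k ∧ Nonempty (H.induce C.supp ≃g cycleG (2 * k + 1)) := by
  classical
  have : (H.induce C.supp).LocallyFinite := fun x =>
    Fintype.ofInjective _ ((Embedding.induce C.supp).toCopy.mapNeighborSet x).injective
  have hmem : ∀ x ∈ p.support, x ∈ C.supp := fun x hx =>
    (ConnectedComponent.sound (p.takeUntil x hx).reachable.symm).trans hv
  refine exists_nonempty_iso_cycleG C.connected_toSimpleGraph.preconnected
    (hH.comap (Embedding.induce C.supp).isContained)
    (fun x => ((Embedding.induce C.supp).toCopy.degree_le x).trans (hdeg _))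
    (p.induce C.supp hmem) ?_
  rwa [← Walk.length_map (Embedding.induce C.supp).toHom, Walk.map_induce]

variable {G : SimpleGraph V}

theorem isOddAntihole_induce_of_compl_iso {s : Set V} {k : ℕ} (hk : 2 ≤ k)
    (e : Gᶜ.induce s ≃g cycleG (2 * k + 1)) : IsOddAntihole (G.induce s) := by
  have hcompl : (Gᶜ.induce s)ᶜ = G.induce s := by
    ext x y
    have := G.ne_of_adj (a := (x : V)) (b := y)
    simp only [compl_adj, comap_adj, Function.Embedding.subtype_apply, ← Subtype.coe_ne_coe]
    tauto
  rw [← hcompl]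
  refine ⟨k, hk, ⟨e.toEquiv, fun {x y} => ?_⟩⟩
  rw [compl_adj, compl_adj, RelIso.coe_fn_toEquiv, e.injective.ne_iff, e.map_adj_iff]

theorem adj_of_compl_connectedComponentMk_ne {v w : V}
    (h : Gᶜ.connectedComponentMk v ≠ Gᶜ.connectedComponentMk w) : G.Adj v w := by
  by_contra hvw
  have hne : v ≠ w := fun hvw => h (congrArg _ hvw)
  exact h (ConnectedComponent.sound (show Gᶜ.Adj v w from ⟨hne, hvw⟩).reachable)

theorem isJoinOfOddAntiholesAndClique_of_components [Finite V]
    (hne : ∃ C : Gᶜ.ConnectedComponent, C.supp.Nontrivial)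
    (hanti : ∀ C : Gᶜ.ConnectedComponent, C.supp.Nontrivial → IsOddAntihole (G.induce C.supp)) :
    IsJoinOfOddAntiholesAndClique G := by
  obtain ⟨m, ⟨e⟩⟩ := Finite.exists_equiv_fin {C : Gᶜ.ConnectedComponent // C.supp.Nontrivial}
  let Q : Set V := {v | (Gᶜ.connectedComponentMk v).supp.Subsingleton}
  have hQ : ∀ i, ∀ v ∈ (e.symm i).1.supp, v ∉ Q := by
    rintro i v hv hvQ
    refine Set.not_subsingleton_iff.mpr (e.symm i).2 ?_
    rwa [← (hv : Gᶜ.connectedComponentMk v = _)]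
  have hsep : ∀ {i j v w}, i ≠ j → v ∈ (e.symm i).1.supp → w ∈ (e.symm j).1.supp →
      Gᶜ.connectedComponentMk v ≠ Gᶜ.connectedComponentMk w := fun hij hv hw hvw =>
    hij (e.symm.injective (Subtype.ext (hv.symm.trans (hvw.trans hw))))
  refine ⟨m, fun i => (e.symm i).1.supp, Q, ?_, ?_, fun i => Set.disjoint_left.mpr (hQ i), ?_,
    fun i => hanti _ (e.symm i).2, ?_, ?_, ?_⟩
  · obtain ⟨C, hC⟩ := hne
    exact (e ⟨C, hC⟩).pos
  · exact fun i j hij => Set.disjoint_left.mpr fun v hv hv' => hsep hij hv hv' rfl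
  · refine Set.eq_univ_of_forall fun v => ?_
    rcases (Gᶜ.connectedComponentMk v).supp.subsingleton_or_nontrivial with hv | hv
    · exact Or.inl hv
    · exact Or.inr (Set.mem_iUnion.mpr ⟨e ⟨_, hv⟩, by simp⟩)
  · exact fun v hv w _ hvw => adj_of_compl_connectedComponentMk_ne fun h =>
      hvw (hv rfl h.symm)
  · exact fun i j v w hij hv hw => adj_of_compl_connectedComponentMk_ne (hsep hij hv hw)
  · refine fun i v w hv hw => adj_of_compl_connectedComponentMk_ne fun h => hQ i w ?_ hw
    exact h.symm.trans hv

theorem exists_adj_of_supp_nontrivial {H : SimpleGraph V} {C : H.ConnectedComponent}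
    (hC : C.supp.Nontrivial) : ∃ v w, v ∈ C.supp ∧ H.Adj v w := by
  obtain ⟨v, hv, w, hw, hvw⟩ := hC
  obtain ⟨p⟩ := C.reachable_of_mem_supp hv hw
  exact ⟨v, _, hv, p.adj_snd (p.not_nil_of_ne hvw)⟩

theorem isJoinOfOddAntiholesAndClique_of_odd_loops [Finite V] [Gᶜ.LocallyFinite]
    (hG : Gᶜ.CliqueFree 3) (hne : ∃ v w, Gᶜ.Adj v w) (hdeg : ∀ v, Gᶜ.degree v ≤ 2)
    (hloop : ∀ v w, Gᶜ.Adj v w → ∃ p : Gᶜ.Walk v v, Odd p.length) :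
    IsJoinOfOddAntiholesAndClique G := by
  refine isJoinOfOddAntiholesAndClique_of_components ?_ fun C hC => ?_
  · obtain ⟨v, w, hvw⟩ := hne
    exact ⟨Gᶜ.connectedComponentMk v, v, rfl, w, ConnectedComponent.sound hvw.reachable.symm,
      hvw.ne⟩
  · obtain ⟨v, w, rfl, hvw⟩ := exists_adj_of_supp_nontrivial hC
    obtain ⟨p, hp⟩ := hloop v w hvw
    obtain ⟨k, hk, ⟨e⟩⟩ := exists_component_iso_cycleG hG hdeg _ rfl p hp
    exact isOddAntihole_induce_of_compl_iso hk e

end Components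

theorem HasFullSupportFacet.isJoinOfOddAntiholesAndClique [Fintype V] [DecidableEq V]
    {G : SimpleGraph V} (hfacet : HasFullSupportFacet G) (hLS : LSplus (ESTAB G) = STAB G)
    (hα : stabilityNumber G = 2) : IsJoinOfOddAntiholesAndClique G := by
  classical
  have hG : Gᶜ.CliqueFree 3 := cliqueFree_compl_of_stabilityNumber_lt (by omega)
  obtain ⟨v, w, hvw⟩ := exists_compl_adj_of_one_lt_stabilityNumber (G := G) (by omega)
  have : Nontrivial V := ⟨v, w, hvw.ne⟩
  obtain ⟨a, b, hab⟩ := hfacet.exists_isPositiveFacet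
  exact isJoinOfOddAntiholesAndClique_of_odd_loops hG ⟨v, w, hvw⟩
    (hab.compl_degree_le_two hG hLS) fun _ _ => hab.exists_odd_loop hG

/-- (1) a graph G with α(G) = 2 containing an induced odd antihole C̄_{2k+1}
(k ≥ 2) and a vertex w outside it with at least one neighbor and at least one non-neighbor
in C̄ contains an LS₊-imperfect induced subgraph; (2) in particular, every facet-defining
LS₊-perfect graph G with α(G) = 2 is an odd antihole or the complete join of odd
antihole(s) and a (possibly empty) clique. -/
theorem stmt7 :
    (∀ (V : Type) [Fintype V] [DecidableEq V] (G : SimpleGraph V),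
      stabilityNumber G = 2 →
      ∀ (k : ℕ), 2 ≤ k → ∀ (u : ZMod (2 * k + 1) → V), Function.Injective u →
        (∀ a b, a ≠ b → (G.Adj (u a) (u b) ↔
          (a - b ≠ (k : ZMod (2 * k + 1)) ∧ b - a ≠ (k : ZMod (2 * k + 1))))) →
      ∀ w : V, w ∉ Set.range u → (∃ a, G.Adj w (u a)) → (∃ a, ¬ G.Adj w (u a)) →
        ∃ T : Finset V,
          LSplus (ESTAB (G.induce (T : Set V))) ≠ STAB (G.induce (T : Set V))) ∧
    (∀ (V : Type) [Fintype V] [DecidableEq V] (G : SimpleGraph V),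
      HasFullSupportFacet G → LSplus (ESTAB G) = STAB G → stabilityNumber G = 2 →
        IsOddAntihole G ∨ IsJoinOfOddAntiholesAndClique G) := by
  refine ⟨fun V _ _ G hα k hk u hinj hadj w hw _ hna => ?_, fun V _ _ G hfacet hLS hα => ?_⟩
  · have hu : IsOddAntiholeEmbedding G u := ⟨hinj, hadj⟩
    exact hu.exists_induce_LSplus_ne_STAB (by omega)
      (cliqueFree_compl_of_stabilityNumber_lt (by omega)) hw hna
  · exact Or.inr (hfacet.isJoinOfOddAntiholesAndClique hLS hα)
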